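/- Let A and B be the companion matrices of f(x) = (x-1)^6 and g(x) = (x+1)^2(x^4+x^3+x^2+x+1) respectively, regarded as elements of GL(6,ℤ). Then the elements t = A⁻¹B and r = A⁻¹BA both have infinite order, the subgroup of GL(6,ℤ) generated by A and B equals the subgroup generated by t and r, and this group is the internal free product of the cyclic subgroups ⟨t⟩ and ⟨r⟩; in particular, the hypergeometric group Γ(α,β) with α = (0,0,0,0,0,0) and β = (1/2,1/2,1/5,2/5,3/5,4/5) is isomorphic to ℤ * ℤ, a free group of rank 2. -/

import Mathlib

open Matrix

/-- The companion matrix of `f(x) = (x-1)^6 = x^6 - 6x^5 + 15x^4 - 20x^3 + 15x^2 - 6x + 1`. -/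
def companionF : Matrix (Fin 6) (Fin 6) ℤ :=
  !![0,0,0,0,0,-1; 1,0,0,0,0,6; 0,1,0,0,0,-15; 0,0,1,0,0,20; 0,0,0,1,0,-15; 0,0,0,0,1,6]

/-- The companion matrix of `g(x) = (x+1)^2(x^4+x^3+x^2+x+1) = x^6 + 3x^5 + 4x^4 + 4x^3 + 4x^2 + 3x + 1`. -/
def companionG : Matrix (Fin 6) (Fin 6) ℤ :=
  !![0,0,0,0,0,-1; 1,0,0,0,0,-3; 0,1,0,0,0,-4; 0,0,1,0,0,-4; 0,0,0,1,0,-4; 0,0,0,0,1,-3]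

namespace HG

/-- The matrix of `t = A⁻¹B`. -/
def tM : Matrix (Fin 6) (Fin 6) ℤ := !![1, 0, 0, 0, 0, -9; 0, 1, 0, 0, 0, 11; 0, 0, 1, 0, 0, -24; 0, 0, 0, 1, 0, 11; 0, 0, 0, 0, 1, -9; 0, 0, 0, 0, 0, 1]

/-- The matrix of `r = A⁻¹BA`. -/
def rM : Matrix (Fin 6) (Fin 6) ℤ := !![0, 0, 0, 0, -9, -55; 1, 0, 0, 0, 11, 72; 0, 1, 0, 0, -24, -159; 0, 0, 1, 0, 11, 86; 0, 0, 0, 1, -9, -69; 0, 0, 0, 0, 1, 6]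

/-- An involution inverting both `t` and `r` under conjugation. -/
def eM : Matrix (Fin 6) (Fin 6) ℤ := !![0, 0, 0, 0, -1, -15; 0, 0, 0, -1, 0, 26; 0, 0, -1, 0, 0, -44; 0, -1, 0, 0, 0, 26; -1, 0, 0, 0, 0, -15; 0, 0, 0, 0, 0, 1]

/-- The direction of the transvection `t`. -/
def vV : Fin 6 → ℤ := ![-9, 11, -24, 11, -9, 0]

/-- The direction of the transvection `r ^ 10`. -/
def wV : Fin 6 → ℤ := ![-8, 13, -22, 13, -7, 1]

/-- The functional of the transvection `r ^ 10`. -/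
def chV : Fin 6 → ℤ := ![-10, 10, -10, 10, -10, -630]

/-- The functional of the transvection `t`. -/
def phV : Fin 6 → ℤ := ![0, 0, 0, 0, 0, 1]

/-- Generators of the main cone. -/
def G : Fin 14 → Fin 6 → ℤ := ![![-3, 14, -26, 24, -11, 2],
  ![-1, 5, -10, 10, -5, 1],
  ![-19, 27, -59, 35, -26, 2],
  ![-3, 11, -17, 14, -6, 1],
  ![-55, 168, -238, 185, -72, 12],
  ![-50, 167, -252, 194, -71, 12],
  ![-86, 84, -131, 28, -21, 6],
  ![-19, 28, -62, 38, -27, 2],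
  ![-10, 16, -34, 21, -14, 1],
  ![-4, 17, -29, 25, -11, 2],
  ![-9, 12, -27, 15, -12, 1],
  ![-108, 127, -290, 144, -125, 12],
  ![-109, 118, -276, 145, -130, 12],
  ![-69, 128, -133, 72, -4, 6]]

/-- Generators `v`, `t g` of the positive cone. -/
def Dp : Fin 15 → Fin 6 → ℤ := ![![-9, 11, -24, 11, -9, 0],
  ![-21, 36, -74, 46, -29, 2],
  ![-10, 16, -34, 21, -14, 1],
  ![-37, 49, -107, 57, -44, 2],
  ![-12, 22, -41, 25, -15, 1],
  ![-163, 300, -526, 317, -180, 12],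
  ![-158, 299, -540, 326, -179, 12],
  ![-140, 150, -275, 94, -75, 6],
  ![-37, 50, -110, 60, -45, 2],
  ![-19, 27, -58, 32, -23, 1],
  ![-22, 39, -77, 47, -29, 2],
  ![-18, 23, -51, 26, -21, 1],
  ![-216, 259, -578, 276, -233, 12],
  ![-217, 250, -564, 277, -238, 12],
  ![-123, 194, -277, 138, -58, 6]]

/-- Generators `-v`, `t⁻¹ g` of the negative cone. -/
def Dm : Fin 15 → Fin 6 → ℤ := ![![9, -11, 24, -11, 9, 0],
  ![15, -8, 22, 2, 7, 2],
  ![8, -6, 14, -1, 4, 1],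
  ![-1, 5, -11, 13, -8, 2],
  ![6, 0, 7, 3, 3, 1],
  ![53, 36, 50, 53, 36, 12],
  ![58, 35, 36, 62, 37, 12],
  ![-32, 18, 13, -38, 33, 6],
  ![-1, 6, -14, 16, -9, 2],
  ![-1, 5, -10, 10, -5, 1],
  ![14, -5, 19, 3, 7, 2],
  ![0, 1, -3, 4, -3, 1],
  ![0, -5, -2, 12, -17, 12],
  ![-1, -14, 12, 13, -22, 12],
  ![-15, 62, 11, 6, 50, 6]]

/-- The powers `(-r)^(i+1)`. -/
def SP : Fin 10 → Matrix (Fin 6) (Fin 6) ℤ := ![!![0, 0, 0, 0, 9, 55; -1, 0, 0, 0, -11, -72; 0, -1, 0, 0, 24, 159; 0, 0, -1, 0, -11, -86; 0, 0, 0, -1, 9, 69; 0, 0, 0, 0, -1, -6],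
  !![0, 0, 0, -9, 26, 291; 0, 0, 0, 11, -36, -382; 1, 0, 0, -24, 68, 774; 0, 1, 0, 11, -37, -402; 0, 0, 1, -9, 23, 293; 0, 0, 0, 1, -3, -33],
  !![0, 0, 9, -26, 42, 822; 0, 0, -11, 36, -63, -1138; 0, 0, 24, -68, 111, 2167; -1, 0, -11, 37, -63, -1159; 0, -1, 9, -23, 37, 762; 0, 0, -1, 3, -5, -95],
  !![0, -9, 26, -42, 58, 1633; 0, 11, -36, 63, -89, -2364; 0, -24, 68, -111, 156, 4321; 0, 11, -37, 63, -88, -2379; 1, -9, 23, -37, 51, 1462; 0, 1, -3, 5, -7, -192],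
  !![9, -26, 42, -58, 74, 2598; -11, 36, -63, 89, -115, -3891; 24, -68, 111, -156, 200, 6924; -11, 37, -63, 88, -115, -3891; 9, -23, 37, -51, 64, 2289; -1, 3, -5, 7, -9, -310],
  !![26, -42, 58, -74, 81, 3551; -36, 63, -89, 115, -130, -5457; 68, -111, 156, -200, 220, 9537; -37, 63, -88, 115, -130, -5443; 23, -37, 51, -64, 70, 3102; -3, 5, -7, 9, -10, -429],
  !![42, -58, 74, -81, 80, 4323; -63, 89, -115, 130, -131, -6785; 111, -156, 200, -220, 220, 11694; -63, 88, -115, 130, -130, -6765; 37, -51, 64, -70, 70, 3760; -5, 7, -9, 10, -10, -528],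
  !![58, -74, 81, -80, 80, 4800; -89, 115, -130, 131, -130, -7667; 156, -200, 220, -220, 221, 13073; -88, 115, -130, 130, -130, -7646; 51, -64, 70, -70, 70, 4173; -7, 9, -10, 10, -10, -592],
  !![74, -81, 80, -80, 80, 4997; -115, 130, -131, 130, -130, -8079; 200, -220, 220, -221, 220, 13691; -115, 130, -130, 130, -131, -8064; 64, -70, 70, -70, 70, 4355; -9, 10, -10, 10, -10, -621],
  !![81, -80, 80, -80, 80, 5040; -130, 131, -130, 130, -130, -8190; 220, -220, 221, -220, 220, 13860; -130, 130, -130, 131, -130, -8190; 70, -70, 70, -70, 71, 4410; -10, 10, -10, 10, -10, -629]]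

/-- Certificates: denominators followed by cone coefficients of `(-r)^(i+1) (Dp j)`. -/
def tabP : List (List (List ℕ)) := [
  [[128, 64, 0, 0, 0, 0, 0, 27, 45, 51, 0, 673, 4, 0, 0],
   [67, 28, 78, 110, 0, 0, 0, 25, 0, 0, 0, 395, 20, 0, 0],
   [128, 19, 90, 0, 0, 0, 0, 27, 0, 13, 0, 673, 4, 0, 0],
   [175, 65, 0, 0, 0, 0, 0, 134, 327, 0, 285, 2386, 88, 0, 0],
   [160, 80, 0, 0, 0, 0, 0, 29, 107, 5, 0, 551, 28, 0, 0],
   [94, 203, 0, 0, 722, 0, 0, 156, 1257, 0, 0, 1518, 338, 0, 0],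
   [102, 0, 857, 1298, 367, 0, 0, 173, 1000, 0, 0, 0, 338, 0, 0],
   [437, 1878, 0, 1235, 0, 0, 0, 455, 566, 5467, 0, 0, 0, 0, 248],
   [32, 51, 26, 0, 0, 0, 0, 27, 0, 45, 0, 673, 4, 0, 0],
   [64, 19, 90, 0, 0, 0, 0, 27, 0, 77, 0, 673, 4, 0, 0],
   [13, 0, 22, 29, 4, 0, 0, 4, 0, 17, 0, 0, 8, 0, 0],
   [80, 0, 0, 0, 0, 0, 0, 29, 107, 5, 80, 311, 28, 0, 0],
   [217, 0, 0, 0, 2292, 0, 0, 829, 4711, 321, 1458, 0, 1251, 0, 0],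
   [17, 0, 0, 312, 0, 0, 11, 60, 0, 134, 138, 0, 108, 0, 0],
   [165, 0, 0, 271, 0, 64, 0, 0, 460, 1116, 0, 62, 0, 0, 37]],
  [[281, 689, 0, 0, 0, 0, 0, 402, 0, 1032, 435, 3498, 124, 0, 0],
   [256, 0, 0, 0, 0, 0, 0, 645, 1139, 749, 1920, 1855, 380, 0, 0],
   [121, 296, 0, 0, 255, 0, 0, 138, 0, 586, 0, 217, 96, 0, 0],
   [640, 0, 0, 0, 0, 0, 0, 2993, 7399, 1785, 8960, 6147, 1676, 0, 0],
   [281, 689, 0, 0, 0, 0, 0, 402, 0, 1032, 435, 3217, 124, 0, 0],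
   [112, 0, 5803, 0, 4537, 0, 0, 1709, 0, 9746, 206, 0, 1740, 0, 0],
   [65, 0, 0, 0, 1055, 0, 0, 1021, 2543, 0, 2560, 3284, 807, 0, 0],
   [23, 0, 186, 337, 163, 0, 0, 98, 0, 0, 136, 900, 0, 0, 0],
   [1801, 0, 9973, 11797, 0, 0, 0, 8520, 0, 31706, 21128, 0, 6140, 0, 0],
   [49, 0, 336, 0, 257, 0, 0, 117, 0, 647, 71, 0, 104, 0, 0],
   [363, 1963, 0, 0, 1519, 0, 0, 916, 0, 3076, 0, 4283, 532, 0, 0],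
   [173, 791, 0, 407, 667, 0, 0, 360, 0, 1345, 0, 0, 260, 0, 0],
   [173, 8203, 0, 5486, 7295, 0, 0, 3769, 0, 12868, 0, 0, 2501, 0, 0],
   [363, 21194, 0, 0, 9158, 0, 0, 8774, 0, 31832, 0, 43903, 3005, 0, 0],
   [15, 105, 0, 0, 0, 0, 0, 36, 18, 0, 0, 834, 32, 0, 5]],
  [[1, 12, 0, 3, 6, 0, 0, 5, 0, 15, 0, 21, 0, 0, 0],
   [23, 44, 0, 171, 0, 0, 0, 195, 464, 0, 554, 205, 0, 0, 0],
   [23, 113, 0, 216, 5, 0, 0, 85, 0, 185, 149, 0, 0, 0, 0],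
   [23, 727, 0, 0, 731, 0, 0, 355, 551, 551, 0, 1116, 0, 0, 0],
   [23, 0, 47, 0, 42, 0, 0, 110, 303, 0, 289, 275, 0, 0, 0],
   [92, 8597, 8066, 0, 8320, 0, 0, 5601, 0, 21759, 0, 24859, 0, 0, 0],
   [92, 12031, 3278, 0, 6884, 0, 0, 5759, 0, 20741, 0, 27597, 0, 0, 0],
   [23, 334, 214, 0, 0, 0, 0, 372, 0, 995, 640, 2937, 0, 0, 0],
   [23, 97, 0, 412, 0, 0, 0, 375, 818, 0, 1053, 465, 0, 0, 0],
   [23, 185, 489, 0, 360, 0, 0, 200, 0, 883, 0, 700, 0, 0, 0],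
   [23, 0, 41, 108, 0, 0, 0, 200, 502, 0, 589, 340, 0, 0, 0],
   [46, 61, 0, 454, 0, 0, 0, 320, 637, 0, 928, 314, 0, 0, 0],
   [92, 0, 9706, 13633, 0, 0, 0, 6561, 0, 17501, 15479, 6855, 0, 0, 0],
   [92, 0, 25592, 0, 16084, 0, 0, 6679, 481, 32291, 0, 17937, 0, 0, 0],
   [80, 0, 0, 0, 0, 0, 0, 1291, 2813, 1635, 3920, 769, 772, 0, 0]],
  [[322, 6278, 0, 0, 8894, 0, 0, 3141, 9843, 0, 0, 3006, 0, 0, 289],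
   [437, 9249, 5657, 0, 21660, 0, 0, 6480, 22512, 0, 0, 0, 0, 0, 740],
   [23, 0, 729, 0, 194, 0, 0, 126, 0, 798, 0, 286, 0, 0, 34],
   [92, 4421, 0, 0, 0, 0, 0, 2231, 7152, 0, 3550, 5982, 0, 0, 609],
   [841, 9417, 7875, 0, 0, 1744, 0, 7867, 25177, 0, 4355, 0, 0, 0, 0],
   [368, 68711, 0, 0, 0, 0, 0, 38479, 122450, 0, 65106, 93522, 0, 0, 8877],
   [491, 0, 287712, 45907, 9275, 12117, 0, 62934, 0, 314709, 0, 0, 0, 0, 0],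
   [46, 0, 5236, 0, 0, 0, 591, 1702, 4814, 0, 0, 0, 219, 236, 0],
   [841, 56362, 3061, 13450, 0, 6120, 0, 26160, 70383, 0, 0, 0, 0, 0, 0],
   [92, 0, 2588, 0, 3122, 0, 0, 1449, 5267, 0, 2198, 0, 0, 0, 171],
   [23, 0, 1628, 355, 868, 0, 0, 356, 0, 1846, 0, 0, 0, 0, 44],
   [351, 0, 22476, 0, 0, 564, 0, 3873, 0, 25845, 0, 0, 736, 0, 742],
   [491, 0, 306817, 52145, 618, 14847, 0, 67483, 0, 330913, 0, 0, 0, 0, 0],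
   [368, 93006, 0, 31190, 152134, 0, 0, 48159, 136581, 0, 0, 0, 0, 0, 4485],
   [23, 571, 0, 1504, 675, 0, 0, 1148, 2596, 0, 2691, 0, 0, 0, 0]],
  [[23, 0, 1811, 0, 508, 0, 0, 292, 0, 1949, 0, 692, 0, 0, 108],
   [23, 0, 1064, 0, 986, 0, 0, 437, 1794, 0, 754, 0, 0, 0, 143],
   [23, 0, 1082, 0, 314, 0, 0, 166, 0, 1151, 0, 406, 0, 0, 74],
   [299, 28499, 0, 9437, 33944, 0, 0, 11478, 35065, 0, 0, 0, 0, 0, 3082],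
   [92, 0, 6467, 0, 1739, 0, 0, 1009, 0, 6881, 0, 2429, 0, 0, 411],
   [370, 167701, 0, 0, 127230, 0, 0, 55153, 0, 329796, 0, 0, 0, 14778, 18293],
   [92, 22611, 20615, 0, 58485, 0, 0, 15912, 59490, 0, 0, 0, 0, 0, 3767],
   [92, 0, 32439, 0, 8783, 0, 0, 5565, 0, 35429, 0, 12877, 0, 0, 1563],
   [387, 31173, 18156, 0, 0, 4720, 0, 16840, 57066, 0, 0, 0, 0, 0, 2040],
   [23, 0, 2893, 0, 822, 0, 0, 458, 0, 3100, 0, 1098, 0, 0, 182],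
   [46, 1452, 1264, 0, 3674, 0, 0, 983, 3721, 0, 0, 0, 0, 0, 257],
   [92, 0, 9149, 0, 2593, 0, 0, 1447, 0, 9839, 0, 3375, 0, 0, 573],
   [368, 165478, 0, 54750, 192846, 0, 0, 66363, 202665, 0, 0, 0, 0, 0, 17641],
   [92, 29319, 53974, 0, 0, 0, 0, 13527, 0, 82545, 0, 61785, 0, 0, 7252],
   [92, 0, 38697, 0, 10561, 0, 0, 6679, 0, 42331, 0, 15299, 0, 0, 1849]],
  [[46, 1565, 2926, 0, 0, 0, 0, 655, 0, 4378, 0, 3100, 0, 0, 455],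
   [115, 0, 17474, 0, 5338, 0, 0, 2477, 0, 18831, 0, 5062, 0, 0, 1373],
   [184, 0, 11499, 0, 3435, 0, 0, 1605, 0, 12373, 0, 3205, 0, 0, 915],
   [23, 0, 2202, 742, 0, 0, 0, 990, 4016, 0, 3381, 0, 0, 0, 530],
   [161, 7137, 0, 0, 5983, 0, 0, 2255, 8655, 0, 0, 3292, 0, 0, 1105],
   [184, 74462, 0, 65763, 0, 0, 0, 34433, 98750, 0, 80023, 0, 0, 0, 17965],
   [184, 0, 92194, 0, 67684, 0, 0, 37237, 163737, 0, 84578, 0, 0, 0, 16645],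
   [46, 11246, 0, 0, 9170, 0, 0, 3785, 13477, 0, 0, 6870, 0, 0, 1531],
   [46, 9131, 0, 4758, 0, 0, 0, 1981, 0, 7198, 0, 3922, 0, 0, 1219],
   [92, 0, 15827, 0, 4691, 0, 0, 2269, 0, 16977, 0, 4829, 0, 0, 1211],
   [874, 46093, 21198, 0, 86754, 0, 0, 22653, 91546, 0, 0, 0, 0, 0, 8887],
   [23, 0, 2192, 947, 0, 0, 0, 446, 0, 2399, 924, 0, 0, 0, 239],
   [986, 719061, 0, 0, 0, 41802, 0, 213668, 764433, 0, 0, 318690, 0, 0, 84420],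
   [368, 243505, 0, 0, 190882, 0, 0, 75618, 291437, 0, 0, 112682, 0, 0, 37346],
   [162, 0, 105474, 0, 0, 2756, 0, 16232, 0, 108375, 0, 31401, 0, 0, 5583]],
  [[184, 0, 25595, 0, 6771, 0, 0, 3269, 0, 26837, 0, 6909, 0, 0, 2211],
   [299, 25952, 0, 6399, 21811, 0, 0, 7387, 28250, 0, 0, 0, 0, 0, 4508],
   [23, 0, 1762, 0, 417, 0, 0, 208, 0, 1808, 0, 463, 0, 0, 162],
   [4, 653, 0, 0, 0, 0, 0, 173, 754, 0, 250, 546, 0, 0, 147],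
   [23, 1679, 0, 961, 0, 0, 0, 327, 0, 1248, 0, 457, 0, 0, 253],
   [644, 0, 979709, 144162, 410427, 0, 0, 143389, 0, 1022910, 0, 0, 0, 0, 80758],
   [3719, 3822786, 0, 2310655, 0, 0, 0, 735106, 0, 2981283, 0, 0, 72139, 0, 581519],
   [92, 29613, 0, 0, 25522, 0, 0, 9228, 36467, 0, 0, 11354, 0, 0, 4720],
   [46, 8784, 0, 0, 5552, 0, 0, 2303, 9773, 0, 0, 3988, 0, 0, 1567],
   [92, 9549, 0, 0, 6146, 0, 0, 2524, 10699, 0, 0, 4214, 0, 0, 1696],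
   [23, 0, 3872, 0, 2387, 0, 0, 639, 1266, 3179, 0, 0, 0, 0, 356],
   [644, 52383, 0, 0, 34446, 0, 0, 13920, 58777, 0, 0, 23682, 0, 0, 9320],
   [368, 312449, 0, 0, 212018, 0, 0, 84258, 353757, 0, 0, 139338, 0, 0, 55186],
   [184, 111258, 0, 82279, 0, 0, 0, 40153, 128646, 0, 91203, 0, 0, 0, 28285],
   [115, 0, 94968, 0, 27546, 0, 0, 13069, 0, 101707, 0, 26189, 0, 0, 7641]],
  [[184, 0, 29109, 0, 7133, 0, 0, 3267, 0, 29339, 0, 8467, 0, 0, 2853],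
   [253, 0, 48240, 0, 0, 0, 0, 5034, 0, 48074, 6547, 22163, 0, 0, 5801],
   [161, 0, 12108, 2165, 5325, 0, 0, 1565, 0, 11879, 0, 0, 0, 0, 1200],
   [92, 23621, 0, 13750, 0, 0, 0, 4121, 0, 16068, 0, 7422, 0, 0, 3979],
   [598, 36723, 0, 12576, 29778, 0, 0, 9495, 35782, 0, 0, 0, 0, 0, 7015],
   [184, 206655, 0, 123926, 0, 0, 0, 36315, 0, 139902, 0, 55836, 0, 0, 34523],
   [1458, 0, 2773455, 0, 496179, 0, 0, 263361, 0, 2874306, 0, 0, 75914, 0, 296570],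
   [493, 217581, 0, 0, 0, 9064, 0, 52001, 214694, 0, 0, 96706, 0, 0, 34074],
   [46, 11821, 0, 0, 0, 0, 0, 1965, 6482, 3804, 0, 11140, 0, 0, 2285],
   [92, 0, 22061, 0, 5465, 0, 0, 2435, 0, 22107, 0, 6615, 0, 0, 2205],
   [638, 75898, 0, 0, 0, 2616, 0, 15821, 69251, 0, 0, 44740, 0, 0, 13597],
   [184, 0, 34749, 0, 8749, 0, 0, 3867, 0, 34979, 0, 10267, 0, 0, 3453],
   [368, 334483, 0, 0, 0, 0, 0, 75187, 350834, 0, 103610, 294922, 0, 0, 79369],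
   [184, 220501, 0, 125746, 0, 0, 0, 38681, 0, 152162, 0, 73212, 0, 0, 36961],
   [322, 157544, 0, 0, 86162, 0, 0, 38189, 167963, 0, 0, 76042, 0, 0, 29403]],
  [[184, 0, 29869, 0, 8597, 0, 0, 3203, 0, 29915, 0, 9563, 0, 0, 3157],
   [46, 3108, 0, 2977, 0, 0, 0, 1000, 3223, 0, 3023, 0, 0, 0, 1000],
   [23, 0, 617, 280, 0, 0, 0, 200, 960, 0, 920, 0, 0, 0, 200],
   [374, 77118, 0, 0, 48272, 0, 0, 15625, 86263, 0, 0, 0, 3928, 0, 17549],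
   [46, 1911, 3506, 0, 0, 0, 0, 551, 0, 4846, 0, 3808, 0, 0, 749],
   [368, 0, 685093, 0, 198853, 0, 0, 72755, 0, 684311, 0, 222359, 0, 0, 73169],
   [92, 0, 160049, 29962, 79667, 0, 0, 20805, 0, 158406, 0, 0, 0, 0, 16474],
   [23, 7532, 0, 6285, 0, 0, 0, 2279, 7279, 0, 5664, 0, 0, 0, 2118],
   [92, 20379, 0, 0, 12634, 0, 0, 4426, 20747, 0, 0, 12726, 0, 0, 4334],
   [92, 0, 9508, 0, 7022, 0, 0, 2599, 14237, 0, 6858, 0, 0, 0, 2181],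
   [23, 2617, 0, 2530, 0, 0, 0, 550, 0, 1760, 747, 0, 0, 0, 550],
   [123, 11220, 0, 0, 0, 0, 752, 2175, 0, 16479, 0, 0, 0, 1424, 2382],
   [1161, 0, 2474634, 0, 0, 53115, 0, 239034, 0, 2490630, 0, 0, 61672, 0, 242560],
   [368, 340914, 0, 121330, 324146, 0, 0, 88301, 338359, 0, 0, 0, 0, 0, 68655],
   [23, 0, 22421, 3987, 9968, 0, 0, 2893, 0, 22048, 0, 0, 0, 0, 2234]],
  [[41, 0, 5399, 0, 0, 0, 320, 640, 0, 5481, 0, 0, 0, 320, 640],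
   [23, 0, 1554, 677, 0, 0, 0, 500, 2446, 0, 2323, 0, 0, 0, 500],
   [23, 960, 0, 920, 0, 0, 0, 200, 0, 663, 280, 0, 0, 0, 200],
   [23, 3291, 0, 3127, 0, 0, 0, 1050, 3429, 0, 3196, 0, 0, 0, 1050],
   [23, 0, 3032, 0, 998, 0, 0, 325, 0, 3078, 0, 975, 0, 0, 325],
   [453, 402885, 0, 0, 0, 39518, 0, 107834, 464487, 0, 0, 0, 0, 6909, 62244],
   [41, 0, 62918, 0, 0, 0, 3771, 7460, 0, 63902, 0, 0, 0, 3730, 7460],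
   [23, 6913, 0, 6537, 0, 0, 0, 2248, 7327, 0, 6813, 0, 0, 0, 2225],
   [23, 3451, 0, 3254, 0, 0, 0, 1100, 3612, 0, 3346, 0, 0, 0, 1100],
   [41, 0, 8119, 0, 0, 0, 480, 960, 0, 8242, 0, 0, 0, 480, 960],
   [23, 1691, 0, 1604, 0, 0, 0, 550, 1829, 0, 1719, 0, 0, 0, 550],
   [23, 1500, 2417, 0, 0, 0, 0, 400, 0, 3513, 0, 2873, 0, 0, 550],
   [16, 16205, 0, 0, 11034, 0, 0, 3538, 16721, 0, 0, 10194, 0, 0, 3474],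
   [41, 0, 66658, 0, 0, 0, 3950, 7900, 0, 67642, 0, 0, 0, 3991, 7900],
   [23, 8033, 0, 7587, 0, 0, 0, 2575, 8447, 0, 7863, 0, 0, 0, 2598]]]

/-- Certificates: denominators followed by cone coefficients of `-(-r)^(i+1) (Dm j)`. -/
def tabM : List (List (List ℕ)) := [
  [[128, 64, 0, 0, 0, 0, 0, 27, 45, 51, 0, 673, 4, 0, 0],
   [320, 0, 0, 0, 640, 0, 0, 97, 631, 745, 0, 403, 204, 0, 0],
   [128, 19, 90, 0, 0, 0, 0, 27, 0, 269, 0, 673, 4, 0, 0],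
   [1, 0, 0, 1, 0, 0, 0, 0, 1, 0, 0, 0, 0, 0, 0],
   [23, 7, 0, 0, 9, 0, 0, 5, 11, 11, 0, 121, 0, 0, 0],
   [13, 0, 0, 0, 0, 0, 0, 32, 0, 212, 78, 592, 9, 12, 0],
   [16, 0, 0, 0, 192, 0, 0, 33, 55, 233, 0, 291, 60, 0, 0],
   [95, 0, 0, 422, 0, 0, 0, 0, 0, 129, 0, 86, 439, 19, 0],
   [1, 0, 0, 0, 0, 0, 0, 0, 1, 1, 0, 0, 0, 0, 0],
   [1, 0, 0, 0, 0, 0, 0, 0, 0, 1, 0, 0, 0, 0, 0],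
   [23, 7, 6, 0, 0, 0, 0, 10, 0, 61, 13, 270, 0, 0, 0],
   [1, 0, 0, 1, 0, 0, 0, 0, 0, 0, 0, 1, 0, 0, 0],
   [943, 0, 0, 5751, 0, 0, 0, 137, 0, 928, 0, 35577, 0, 253, 0],
   [71, 0, 0, 0, 0, 0, 0, 0, 734, 66, 0, 1140, 21, 52, 0],
   [89, 267, 0, 0, 0, 0, 0, 110, 0, 958, 0, 54, 393, 61, 0]],
  [[281, 689, 0, 0, 0, 0, 0, 402, 0, 1032, 435, 3498, 124, 0, 0],
   [349, 0, 0, 969, 773, 0, 0, 953, 2662, 0, 2580, 0, 896, 0, 0],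
   [242, 909, 0, 0, 360, 0, 0, 387, 0, 991, 0, 3673, 164, 0, 0],
   [9, 10, 0, 0, 2, 0, 0, 7, 0, 0, 7, 135, 4, 0, 0],
   [281, 689, 0, 0, 0, 0, 0, 402, 0, 1032, 435, 3779, 124, 0, 0],
   [3, 109, 0, 0, 70, 0, 0, 49, 0, 163, 0, 308, 25, 0, 0],
   [3, 122, 0, 0, 47, 0, 0, 50, 0, 185, 0, 283, 23, 0, 0],
   [856, 9993, 0, 0, 0, 0, 0, 9891, 0, 47366, 19539, 0, 9583, 499, 0],
   [571, 0, 0, 0, 1713, 0, 0, 234, 1000, 0, 0, 72, 585, 77, 0],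
   [128, 19, 90, 0, 0, 0, 0, 27, 0, 13, 0, 673, 4, 0, 0],
   [202, 31, 0, 0, 788, 0, 0, 548, 1907, 0, 1292, 0, 536, 0, 0],
   [38, 0, 0, 37, 0, 0, 0, 19, 0, 39, 57, 83, 28, 0, 0],
   [66, 1153, 0, 0, 1324, 0, 0, 595, 0, 2569, 0, 1721, 874, 0, 0],
   [8, 0, 0, 35, 206, 0, 0, 62, 175, 0, 97, 0, 112, 0, 0],
   [8, 0, 263, 0, 141, 0, 0, 105, 0, 554, 118, 0, 76, 0, 0]],
  [[1, 12, 0, 3, 6, 0, 0, 5, 0, 15, 0, 21, 0, 0, 0],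
   [23, 127, 0, 0, 0, 0, 0, 265, 574, 66, 655, 1175, 0, 0, 0],
   [46, 665, 57, 0, 315, 0, 0, 290, 0, 925, 0, 1705, 0, 0, 0],
   [363, 3428, 0, 0, 2219, 0, 0, 1487, 0, 6623, 0, 1792, 824, 0, 0],
   [23, 36, 7, 0, 0, 0, 0, 120, 297, 0, 317, 457, 0, 0, 0],
   [92, 7963, 8494, 0, 8240, 0, 0, 5439, 0, 21297, 0, 24821, 0, 0, 0],
   [92, 11170, 0, 0, 9676, 0, 0, 5281, 6641, 9033, 0, 22083, 0, 0, 0],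
   [43, 711, 0, 0, 0, 0, 0, 1785, 0, 8816, 5008, 870, 0, 436, 0],
   [128, 0, 0, 0, 0, 0, 0, 421, 851, 653, 1280, 159, 252, 0, 0],
   [121, 296, 0, 0, 255, 0, 0, 138, 0, 586, 0, 217, 96, 0, 0],
   [23, 78, 19, 0, 0, 0, 0, 260, 632, 0, 683, 1040, 0, 0, 0],
   [98, 0, 777, 0, 313, 0, 0, 271, 0, 1494, 288, 0, 132, 0, 0],
   [142, 17623, 222, 0, 0, 0, 334, 6837, 0, 19423, 0, 44493, 0, 0, 0],
   [363, 38831, 0, 0, 19259, 0, 0, 16175, 0, 65348, 0, 44806, 4997, 0, 0],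
   [23, 0, 3772, 49, 2254, 0, 0, 963, 0, 4969, 0, 1828, 0, 0, 0]],
  [[322, 6278, 0, 0, 8894, 0, 0, 3141, 9843, 0, 0, 3006, 0, 0, 289],
   [23, 763, 253, 60, 2200, 0, 0, 600, 1866, 0, 0, 0, 0, 0, 0],
   [23, 0, 970, 0, 1215, 0, 0, 330, 655, 799, 0, 5, 0, 0, 0],
   [23, 457, 281, 487, 530, 0, 0, 270, 0, 856, 0, 0, 0, 0, 0],
   [23, 0, 217, 289, 0, 0, 0, 236, 636, 0, 690, 0, 0, 0, 29],
   [92, 20205, 23078, 0, 0, 0, 0, 9137, 0, 45743, 0, 41943, 0, 0, 2544],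
   [414, 90741, 0, 27966, 105144, 4646, 0, 49706, 133209, 0, 0, 0, 0, 0, 0],
   [92, 13649, 0, 0, 0, 0, 0, 6049, 19778, 0, 8250, 15966, 0, 0, 1839],
   [1, 0, 7, 7, 10, 0, 0, 10, 28, 0, 23, 0, 0, 0, 0],
   [23, 113, 0, 216, 5, 0, 0, 85, 0, 185, 149, 0, 0, 0, 0],
   [23, 445, 0, 870, 0, 0, 0, 520, 1158, 0, 1307, 0, 0, 0, 60],
   [46, 519, 0, 172, 986, 0, 0, 340, 947, 0, 92, 0, 0, 0, 0],
   [114, 0, 20259, 0, 6267, 1546, 0, 12445, 41610, 0, 19584, 0, 0, 0, 0],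
   [92, 14577, 3519, 730, 35039, 0, 0, 10359, 32547, 0, 0, 0, 0, 0, 0],
   [46, 7438, 0, 0, 6480, 0, 0, 2919, 9669, 0, 0, 4180, 0, 0, 665]],
  [[23, 0, 1811, 0, 508, 0, 0, 292, 0, 1949, 0, 692, 0, 0, 108],
   [161, 14870, 0, 0, 12872, 0, 0, 5548, 18849, 0, 0, 8548, 0, 0, 1592],
   [23, 0, 2540, 0, 702, 0, 0, 418, 0, 2747, 0, 978, 0, 0, 142],
   [299, 12227, 0, 4695, 14324, 0, 0, 5228, 14903, 0, 0, 0, 0, 0, 1012],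
   [46, 2507, 0, 1318, 0, 0, 0, 637, 0, 2034, 0, 1398, 0, 0, 253],
   [368, 138955, 0, 0, 0, 0, 0, 53659, 185442, 0, 75450, 160554, 0, 0, 23537],
   [1458, 0, 1342059, 0, 311823, 0, 0, 198471, 0, 1535880, 0, 0, 46514, 0, 88610],
   [92, 0, 54489, 0, 15601, 0, 0, 8451, 0, 58123, 0, 20339, 0, 0, 3621],
   [161, 6219, 0, 0, 4916, 0, 0, 2344, 7760, 0, 0, 3904, 0, 0, 596],
   [23, 0, 729, 0, 194, 0, 0, 126, 0, 798, 0, 286, 0, 0, 34],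
   [253, 0, 44830, 0, 0, 0, 0, 7520, 0, 49482, 7273, 25320, 0, 0, 3260],
   [92, 0, 5339, 0, 1471, 0, 0, 889, 0, 5753, 0, 2161, 0, 0, 291],
   [387, 0, 293109, 0, 0, 17767, 0, 64573, 102429, 221565, 0, 0, 0, 0, 4947],
   [368, 150945, 0, 0, 111890, 0, 0, 53642, 180661, 0, 0, 101770, 0, 0, 16842],
   [1, 140, 111, 0, 345, 0, 0, 90, 345, 0, 0, 0, 0, 0, 26]],
  [[46, 1565, 2926, 0, 0, 0, 0, 655, 0, 4378, 0, 3100, 0, 0, 455],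
   [92, 11600, 0, 3478, 13002, 0, 0, 4259, 13875, 0, 0, 0, 0, 0, 1541],
   [184, 0, 28811, 0, 8459, 0, 0, 4261, 0, 30789, 0, 9701, 0, 0, 2099],
   [46, 2035, 3528, 0, 0, 0, 0, 857, 0, 5424, 0, 4154, 0, 0, 543],
   [161, 9340, 0, 0, 7811, 0, 0, 3056, 11387, 0, 0, 4614, 0, 0, 1354],
   [368, 229105, 0, 0, 193858, 0, 0, 74770, 280349, 0, 0, 109770, 0, 0, 33554],
   [368, 0, 481387, 0, 135563, 0, 0, 69997, 0, 513449, 0, 155113, 0, 0, 35359],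
   [7, 0, 5110, 0, 0, 0, 0, 716, 0, 5566, 853, 2367, 0, 0, 502],
   [46, 1521, 1126, 0, 3720, 0, 0, 960, 3675, 0, 0, 0, 0, 0, 280],
   [23, 0, 1082, 0, 314, 0, 0, 166, 0, 1151, 0, 406, 0, 0, 74],
   [23, 0, 5818, 0, 0, 0, 0, 859, 0, 6299, 949, 2968, 0, 0, 531],
   [874, 23361, 41112, 0, 0, 0, 0, 9813, 0, 63102, 0, 46702, 0, 0, 6337],
   [2, 1239, 0, 0, 0, 78, 0, 388, 1347, 0, 0, 534, 0, 0, 132],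
   [1748, 638501, 364589, 0, 1385271, 0, 0, 358804, 1396134, 0, 0, 0, 0, 0, 116937],
   [362, 148929, 0, 127536, 0, 0, 2592, 34829, 0, 83298, 0, 0, 0, 0, 19383]],
  [[184, 0, 25595, 0, 6771, 0, 0, 3269, 0, 26837, 0, 6909, 0, 0, 2211],
   [299, 49566, 0, 11883, 48827, 0, 0, 15744, 57495, 0, 0, 0, 0, 0, 7981],
   [27, 0, 5673, 0, 0, 140, 0, 755, 0, 5784, 0, 1215, 0, 0, 390],
   [46, 2889, 1038, 0, 4526, 0, 0, 1237, 5190, 0, 0, 0, 0, 0, 563],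
   [184, 0, 29405, 0, 7893, 0, 0, 3827, 0, 30923, 0, 8123, 0, 0, 2493],
   [1677, 0, 2980767, 0, 0, 59685, 0, 355872, 0, 3125892, 0, 0, 62996, 0, 233795],
   [16, 12711, 0, 0, 8766, 0, 0, 3518, 14459, 0, 0, 5926, 0, 0, 2190],
   [92, 41406, 0, 10762, 34442, 0, 0, 11687, 44429, 0, 0, 0, 0, 0, 7245],
   [2, 130, 0, 0, 0, 0, 0, 41, 169, 0, 68, 112, 0, 0, 29],
   [184, 0, 11499, 0, 3435, 0, 0, 1605, 0, 12373, 0, 3205, 0, 0, 915],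
   [115, 0, 40513, 0, 11006, 0, 0, 5294, 0, 42652, 0, 11259, 0, 0, 3431],
   [46, 1715, 678, 0, 2688, 0, 0, 733, 3114, 0, 0, 0, 0, 0, 347],
   [1748, 926293, 389853, 0, 1450099, 0, 0, 393180, 1691550, 0, 0, 0, 0, 0, 193901],
   [58, 47463, 0, 0, 0, 2598, 0, 13018, 50317, 0, 0, 16022, 0, 0, 6330],
   [92, 35798, 0, 9534, 29558, 0, 0, 9987, 38061, 0, 0, 0, 0, 0, 6325]],
  [[184, 0, 29109, 0, 7133, 0, 0, 3267, 0, 29339, 0, 8467, 0, 0, 2853],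
   [322, 67957, 0, 0, 36928, 0, 0, 15997, 71154, 0, 0, 35732, 0, 0, 13053],
   [46, 2755, 7082, 0, 0, 0, 0, 1095, 0, 9160, 0, 5660, 0, 0, 1175],
   [1, 52, 145, 0, 0, 0, 0, 22, 0, 184, 0, 109, 0, 0, 23],
   [162, 0, 31044, 0, 0, 692, 0, 3620, 0, 30471, 0, 7263, 0, 0, 2541],
   [1012, 0, 1849966, 0, 0, 0, 0, 206622, 0, 1885193, 255718, 814791, 0, 0, 211609],
   [1012, 0, 1793518, 0, 0, 0, 0, 203266, 0, 1841843, 257594, 792257, 0, 0, 205043],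
   [437, 247671, 0, 216154, 0, 0, 0, 49899, 0, 161526, 41334, 0, 0, 0, 46564],
   [391, 46230, 0, 28541, 0, 0, 0, 8627, 0, 32322, 0, 9369, 0, 0, 7268],
   [23, 0, 1762, 0, 417, 0, 0, 208, 0, 1808, 0, 463, 0, 0, 162],
   [437, 0, 64171, 15156, 0, 0, 0, 20650, 100316, 0, 79787, 0, 0, 0, 16970],
   [184, 0, 23469, 0, 5517, 0, 0, 2667, 0, 23699, 0, 6667, 0, 0, 2253],
   [644, 0, 1085042, 0, 0, 0, 0, 119878, 0, 1100601, 144062, 468907, 0, 0, 123729],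
   [92, 98650, 0, 0, 0, 0, 0, 17013, 57581, 29459, 0, 87721, 0, 0, 18606],
   [46, 24267, 0, 0, 0, 0, 0, 3867, 13210, 7388, 0, 23628, 0, 0, 4837]],
  [[184, 0, 29869, 0, 8597, 0, 0, 3203, 0, 29915, 0, 9563, 0, 0, 3157],
   [92, 20607, 0, 0, 11194, 0, 0, 4406, 20515, 0, 0, 13126, 0, 0, 4314],
   [23, 1527, 1331, 0, 3340, 0, 0, 695, 3412, 0, 0, 0, 0, 0, 495],
   [46, 2947, 6294, 0, 0, 0, 0, 953, 0, 8304, 0, 6126, 0, 0, 1227],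
   [46, 3100, 0, 2682, 0, 0, 0, 963, 3123, 0, 2590, 0, 0, 0, 917],
   [19, 13438, 8865, 0, 0, 1843, 0, 5162, 22571, 0, 0, 0, 0, 0, 2685],
   [1748, 985449, 785867, 0, 2057529, 0, 0, 434764, 2127032, 0, 0, 0, 0, 0, 307015],
   [299, 143194, 0, 52035, 146748, 0, 0, 37189, 143471, 0, 0, 0, 0, 0, 29670],
   [23, 1292, 2941, 0, 0, 0, 0, 435, 0, 3804, 0, 2740, 0, 0, 555],
   [161, 0, 12108, 2165, 5325, 0, 0, 1565, 0, 11879, 0, 0, 0, 0, 1200],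
   [23, 6095, 0, 3325, 0, 0, 0, 999, 0, 4106, 0, 2478, 0, 0, 1081],
   [92, 5620, 0, 2098, 5182, 0, 0, 1453, 5457, 0, 0, 0, 0, 0, 1127],
   [486, 0, 905469, 0, 205875, 0, 0, 83451, 0, 945066, 0, 0, 26858, 0, 102650],
   [368, 0, 695913, 0, 198313, 0, 0, 74415, 0, 693843, 0, 227891, 0, 0, 73909],
   [92, 36253, 0, 0, 0, 0, 0, 7843, 38708, 0, 14958, 38182, 0, 0, 9809]],
  [[41, 0, 5399, 0, 0, 0, 320, 640, 0, 5481, 0, 0, 0, 320, 640],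
   [23, 3428, 0, 3254, 0, 0, 0, 1100, 3589, 0, 3346, 0, 0, 0, 1100],
   [41, 0, 8078, 0, 0, 0, 480, 960, 0, 8201, 0, 0, 0, 480, 960],
   [23, 1691, 0, 1581, 0, 0, 0, 550, 1829, 0, 1696, 0, 0, 0, 550],
   [23, 0, 3467, 0, 2827, 0, 0, 550, 1500, 2463, 0, 0, 0, 0, 400],
   [387, 0, 829566, 0, 0, 19763, 0, 80600, 0, 838854, 0, 0, 20150, 0, 80600],
   [41, 0, 66658, 0, 0, 0, 3909, 7900, 0, 67642, 0, 0, 0, 3950, 7900],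
   [23, 8033, 0, 7587, 0, 0, 0, 2552, 8447, 0, 7863, 0, 0, 0, 2575],
   [23, 2354, 0, 2277, 0, 0, 0, 500, 0, 1646, 723, 0, 0, 0, 500],
   [23, 0, 617, 280, 0, 0, 0, 200, 960, 0, 920, 0, 0, 0, 200],
   [23, 3291, 0, 3104, 0, 0, 0, 1050, 3429, 0, 3173, 0, 0, 0, 1050],
   [23, 0, 3032, 0, 975, 0, 0, 325, 0, 3078, 0, 952, 0, 0, 325],
   [387, 0, 750906, 0, 0, 18250, 0, 73000, 0, 760194, 0, 0, 17863, 0, 73000],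
   [41, 0, 62918, 0, 0, 0, 3730, 7460, 0, 63902, 0, 0, 0, 3689, 7460],
   [23, 6913, 0, 6537, 0, 0, 0, 2225, 7327, 0, 6813, 0, 0, 0, 2202]]]

/-- Table lookup. -/
def look (l : List (List (List ℕ))) (i j k : ℕ) : ℕ := ((l.getD i []).getD j []).getD k 0

/-- Coefficients of `w`. -/
def cw : Fin 14 → ℕ := ![0, 17, 0, 0, 0, 1, 2, 0, 17, 0, 0, 0, 1, 2]

theorem ckP : ∀ (i : Fin 10) (j : Fin 15), 0 < look tabP i j 0 ∧
    0 < ∑ k : Fin 14, look tabP i j (k + 1) ∧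
    ∀ l : Fin 6, (look tabP i j 0 : ℤ) * ∑ m : Fin 6, SP i l m * Dp j m =
      ∑ k : Fin 14, (look tabP i j (k + 1) : ℤ) * G k l := by
  decide +kernel

theorem ckM : ∀ (i : Fin 10) (j : Fin 15), 0 < look tabM i j 0 ∧
    0 < ∑ k : Fin 14, look tabM i j (k + 1) ∧
    ∀ l : Fin 6, (look tabM i j 0 : ℤ) * -∑ m : Fin 6, SP i l m * Dm j m =
      ∑ k : Fin 14, (look tabM i j (k + 1) : ℤ) * G k l := by
  decide +kernel

theorem ckw : ∀ l : Fin 6, (82 : ℤ) * wV l = ∑ k : Fin 14, (cw k : ℤ) * G k l := by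
  decide +kernel

theorem SP_zero : SP 0 = -rM := by decide +kernel

theorem SP_succ : ∀ i : Fin 9, SP i.succ = -rM * SP i.castSucc := by decide +kernel

theorem SP_last : SP 9 = 1 + vecMulVec wV chV := by decide +kernel

theorem tM_eq : tM = 1 + vecMulVec vV phV := by decide +kernel

theorem eM_sq : eM * eM = 1 := by decide +kernel

theorem eM_tM : eM * tM * eM * tM = 1 := by decide +kernel

theorem eM_rM : eM * rM * eM * rM = 1 := by decide +kernel

theorem rw_w : rM *ᵥ wV = -wV := by decide +kernel

theorem e_v : eM *ᵥ vV = -vV := by decide +kernel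

theorem e_G : ∀ k, ∃ l, eM *ᵥ G k = G l := by decide +kernel

theorem e_Dp : ∀ k, ∃ l, eM *ᵥ Dp k = Dm l := by decide +kernel

theorem e_Dm : ∀ k, ∃ l, eM *ᵥ Dm k = Dp l := by decide +kernel

theorem Dp_succ : ∀ k : Fin 14, tM *ᵥ G k = Dp k.succ := by decide +kernel

theorem t_Dp : ∀ k : Fin 15, ∃ c : Fin 100, tM *ᵥ Dp k = Dp k + ((c : ℕ) : ℤ) • Dp 0 := by
  decide +kernel

theorem ch_Dp : ∀ k, 0 < chV ⬝ᵥ Dp k := by decide +kernel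

theorem ch_Dm : ∀ k, chV ⬝ᵥ Dm k < 0 := by decide +kernel

theorem ph_G : ∀ k, 0 < phV ⬝ᵥ G k := by decide +kernel

theorem ph_v : phV ⬝ᵥ vV = 0 := by decide +kernel

theorem Dp_zero : Dp 0 = vV := by decide +kernel

theorem Dm_zero : Dm 0 = -vV := by decide +kernel

/-- Membership in the rational convex cone (without the origin) generated by `g`. -/
inductive Cone {n : ℕ} (g : Fin n → Fin 6 → ℤ) : (Fin 6 → ℤ) → Prop
  | gen (k : Fin n) : Cone g (g k)
  | add {x y : Fin 6 → ℤ} : Cone g x → Cone g y → Cone g (x + y)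
  | smul {x : Fin 6 → ℤ} (c : ℤ) : 0 < c → Cone g x → Cone g (c • x)
  | div {x : Fin 6 → ℤ} (c : ℤ) : 0 < c → Cone g (c • x) → Cone g x

theorem Cone.map {n m : ℕ} {g : Fin n → Fin 6 → ℤ} {h : Fin m → Fin 6 → ℤ}
    (M : Matrix (Fin 6) (Fin 6) ℤ) (H : ∀ k, Cone h (M *ᵥ g k)) {x : Fin 6 → ℤ}
    (hx : Cone g x) : Cone h (M *ᵥ x) := by
  induction hx with
  | gen k => exact H k
  | add _ _ h1 h2 => rw [mulVec_add]; exact h1.add h2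
  | smul c hc _ h1 => rw [mulVec_smul]; exact h1.smul c hc
  | div c hc _ h1 => rw [mulVec_smul] at h1; exact h1.div c hc

theorem Cone.pos {n : ℕ} {g : Fin n → Fin 6 → ℤ} (f : Fin 6 → ℤ)
    (H : ∀ k, 0 < f ⬝ᵥ g k) {x : Fin 6 → ℤ} (hx : Cone g x) : 0 < f ⬝ᵥ x := by
  induction hx with
  | gen k => exact H k
  | add _ _ h1 h2 => rw [dotProduct_add]; exact add_pos h1 h2
  | smul c hc _ h1 => rw [dotProduct_smul, smul_eq_mul]; exact mul_pos hc h1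
  | div c hc _ h1 =>
    rw [dotProduct_smul, smul_eq_mul] at h1
    exact pos_of_mul_pos_right h1 hc.le

theorem cone_sum {n : ℕ} {g : Fin n → Fin 6 → ℤ} (C : Fin n → ℕ) (s : Finset (Fin n)) :
    ((∀ k ∈ s, C k = 0) ∧ ∑ k ∈ s, (C k : ℤ) • g k = 0) ∨ Cone g (∑ k ∈ s, (C k : ℤ) • g k) := by
  classical
  induction s using Finset.induction_on with
  | empty => left; simp
  | insert a s ha ih =>
    rw [Finset.sum_insert ha]
    rcases Nat.eq_zero_or_pos (C a) with h0 | h0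
    · simp only [h0, Finset.forall_mem_insert, Nat.cast_zero, zero_smul, zero_add, true_and]
      exact ih
    · right
      have h1 : Cone g ((C a : ℤ) • g a) := (Cone.gen a).smul _ (by exact_mod_cast h0)
      rcases ih with ⟨_, ih⟩ | ih
      · rw [ih, add_zero]; exact h1
      · exact h1.add ih

theorem cone_cert {n : ℕ} {g : Fin n → Fin 6 → ℤ} (C : Fin n → ℕ) (d : ℕ) (x : Fin 6 → ℤ)
    (hd : 0 < d) (hC : 0 < ∑ k, C k)
    (h : ∀ l, (d : ℤ) * x l = ∑ k, (C k : ℤ) * g k l) : Cone g x := by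
  have e : (d : ℤ) • x = ∑ k, (C k : ℤ) • g k := by
    funext l
    simp [Finset.sum_apply, h]
  rcases cone_sum (g := g) C Finset.univ with ⟨h0, _⟩ | h0
  · rw [Finset.sum_eq_zero h0] at hC; omega
  · rw [← e] at h0; exact h0.div _ (by exact_mod_cast hd)

theorem cone_w : Cone G wV :=
  cone_cert cw 82 wV (by norm_num) (by decide) (by exact_mod_cast ckw)

theorem SP_pow (i : ℕ) (hi : i < 10) : SP ⟨i, hi⟩ = (-rM) ^ (i + 1) := by
  induction i with
  | zero => rw [zero_add, pow_one]; exact SP_zero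
  | succ i ih =>
    have h := SP_succ ⟨i, by omega⟩
    simp only [Fin.succ_mk, Fin.castSucc_mk] at h
    rw [h, ih (by omega), ← pow_succ']

theorem pow_ten : (-rM) ^ 10 = 1 + vecMulVec wV chV := by
  rw [← SP_last]; exact (SP_pow 9 (by norm_num)).symm

theorem pow_w (n : ℕ) : (-rM) ^ n *ᵥ wV = wV := by
  induction n with
  | zero => simp
  | succ n ih => rw [pow_succ, ← mulVec_mulVec, neg_mulVec, rw_w, neg_neg, ih]

theorem rank_one (v f x : Fin 6 → ℤ) : (1 + vecMulVec v f) *ᵥ x = x + (f ⬝ᵥ x) • v := by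
  rw [add_mulVec, one_mulVec, vecMulVec_mulVec]
  simp

theorem pow_add_ten (n : ℕ) (y : Fin 6 → ℤ) :
    (-rM) ^ (n + 10) *ᵥ y = (-rM) ^ n *ᵥ y + (chV ⬝ᵥ y) • wV := by
  rw [pow_add, pow_ten, ← mulVec_mulVec, rank_one, mulVec_add, mulVec_smul, pow_w]

theorem small_P (i : ℕ) (hi : i < 10) {y : Fin 6 → ℤ} (hy : Cone Dp y) :
    Cone G ((-rM) ^ (i + 1) *ᵥ y) := by
  rw [← SP_pow i hi]
  refine hy.map _ fun j => ?_
  obtain ⟨h1, h2, h3⟩ := ckP ⟨i, hi⟩ j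
  exact cone_cert _ _ _ h1 h2 h3

theorem small_M (i : ℕ) (hi : i < 10) {y : Fin 6 → ℤ} (hy : Cone Dm y) :
    Cone G (-((-rM) ^ (i + 1) *ᵥ y)) := by
  rw [← SP_pow i hi, ← neg_mulVec]
  refine hy.map _ fun j => ?_
  obtain ⟨h1, h2, h3⟩ := ckM ⟨i, hi⟩ j
  rw [neg_mulVec]
  exact cone_cert _ _ _ h1 h2 h3

theorem big_P {y : Fin 6 → ℤ} (hy : Cone Dp y) (n : ℕ) : Cone G ((-rM) ^ (n + 1) *ᵥ y) := by
  induction n using Nat.strong_induction_on with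
  | _ n ih =>
    by_cases hn : n < 10
    · exact small_P n hn hy
    · obtain ⟨m, rfl⟩ : ∃ m, n = m + 10 := ⟨n - 10, by omega⟩
      rw [show m + 10 + 1 = m + 1 + 10 by omega, pow_add_ten]
      exact (ih m (by omega)).add (cone_w.smul _ (hy.pos chV ch_Dp))

theorem big_M {y : Fin 6 → ℤ} (hy : Cone Dm y) (n : ℕ) :
    Cone G (-((-rM) ^ (n + 1) *ᵥ y)) := by
  induction n using Nat.strong_induction_on with
  | _ n ih =>
    by_cases hn : n < 10
    · exact small_M n hn hy
    · obtain ⟨m, rfl⟩ : ∃ m, n = m + 10 := ⟨n - 10, by omega⟩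
      rw [show m + 10 + 1 = m + 1 + 10 by omega, pow_add_ten, neg_add, ← neg_smul,
        ← neg_dotProduct]
      exact (ih m (by omega)).add (cone_w.smul _ (hy.pos (-chV) fun k => by
        rw [neg_dotProduct]; linarith [ch_Dm k]))

/-- Membership in a cone up to sign. -/
def PM {n : ℕ} (g : Fin n → Fin 6 → ℤ) (x : Fin 6 → ℤ) : Prop := Cone g x ∨ Cone g (-x)

theorem PM.neg {n : ℕ} {g : Fin n → Fin 6 → ℤ} {x : Fin 6 → ℤ} (h : PM g x) : PM g (-x) := by
  rcases h with h | h
  · right; rwa [neg_neg]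
  · left; exact h

theorem PM.of_neg {n : ℕ} {g : Fin n → Fin 6 → ℤ} {x : Fin 6 → ℤ} (h : PM g (-x)) : PM g x := by
  simpa using h.neg

theorem PM.map {n m : ℕ} {g : Fin n → Fin 6 → ℤ} {h : Fin m → Fin 6 → ℤ}
    (M : Matrix (Fin 6) (Fin 6) ℤ) (H : ∀ k, Cone h (M *ᵥ g k)) {x : Fin 6 → ℤ}
    (hx : PM g x) : PM h (M *ᵥ x) := by
  rcases hx with hx | hx
  · left; exact hx.map M H
  · right; rw [← mulVec_neg]; exact hx.map M H

theorem e_PG {x : Fin 6 → ℤ} (h : PM G x) : PM G (eM *ᵥ x) :=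
  h.map eM fun k => by obtain ⟨l, hl⟩ := e_G k; rw [hl]; exact .gen l

theorem e_PDp {x : Fin 6 → ℤ} (h : PM Dp x) : PM Dm (eM *ᵥ x) :=
  h.map eM fun k => by obtain ⟨l, hl⟩ := e_Dp k; rw [hl]; exact .gen l

theorem e_PDm {x : Fin 6 → ℤ} (h : PM Dm x) : PM Dp (eM *ᵥ x) :=
  h.map eM fun k => by obtain ⟨l, hl⟩ := e_Dm k; rw [hl]; exact .gen l

theorem t_PG {x : Fin 6 → ℤ} (h : PM G x) : PM Dp (tM *ᵥ x) :=
  h.map tM fun k => by rw [Dp_succ]; exact .gen _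

theorem t_PDp {x : Fin 6 → ℤ} (h : PM Dp x) : PM Dp (tM *ᵥ x) :=
  h.map tM fun k => by
    obtain ⟨c, hc⟩ := t_Dp k
    rw [hc]
    rcases Nat.eq_zero_or_pos (c : ℕ) with h0 | h0
    · rw [h0]; simpa using Cone.gen k
    · exact (Cone.gen k).add ((Cone.gen 0).smul _ (by exact_mod_cast h0))

theorem ph_PG {x : Fin 6 → ℤ} (h : PM G x) : phV ⬝ᵥ x ≠ 0 := by
  rcases h with h | h
  · exact (h.pos phV ph_G).ne'
  · have := h.pos phV ph_G
    rw [dotProduct_neg] at this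
    omega

/-- The union of the two attracting cones of `t`, up to sign. -/
def Dpm (y : Fin 6 → ℤ) : Prop := PM Dp y ∨ PM Dm y

theorem r_pow {y : Fin 6 → ℤ} (hy : Dpm y) (n : ℕ) : PM G (rM ^ (n + 1) *ᵥ y) := by
  have key : PM G ((-rM) ^ (n + 1) *ᵥ y) := by
    rcases hy with (h | h) | (h | h)
    · exact .inl (big_P h n)
    · have := big_P h n
      rw [mulVec_neg] at this
      exact .inr this
    · exact .inr (big_M h n)
    · have := big_M h n
      rw [mulVec_neg, neg_neg] at this
      exact .inl this
  rcases Nat.even_or_odd (n + 1) with h | h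
  · rwa [h.neg_pow] at key
  · rw [h.neg_pow, neg_mulVec] at key; exact key.of_neg

theorem conj_pow (M : Matrix (Fin 6) (Fin 6) ℤ) (n : ℕ) :
    (eM * M * eM) ^ n = eM * M ^ n * eM := by
  induction n with
  | zero => simp [eM_sq]
  | succ n ih =>
    rw [pow_succ, ih, pow_succ]
    calc eM * M ^ n * eM * (eM * M * eM) = eM * M ^ n * (eM * eM) * M * eM := by
          simp only [Matrix.mul_assoc]
      _ = _ := by rw [eM_sq]; simp only [Matrix.mul_assoc, Matrix.mul_one]

theorem conj_vec (M : Matrix (Fin 6) (Fin 6) ℤ) (x : Fin 6 → ℤ) :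
    (eM * M * eM) *ᵥ x = eM *ᵥ (M *ᵥ (eM *ᵥ x)) := by
  simp only [mulVec_mulVec, Matrix.mul_assoc]

theorem e_Dpm {y : Fin 6 → ℤ} (hy : Dpm y) : Dpm (eM *ᵥ y) := by
  rcases hy with h | h
  · exact .inr (e_PDp h)
  · exact .inl (e_PDm h)

theorem r_pow_inv {y : Fin 6 → ℤ} (hy : Dpm y) (n : ℕ) :
    PM G ((eM * rM * eM) ^ (n + 1) *ᵥ y) := by
  rw [conj_pow, conj_vec]
  exact e_PG (r_pow (e_Dpm hy) n)

theorem t_pow (n : ℕ) (x : Fin 6 → ℤ) : tM ^ n *ᵥ x = x + (n * (phV ⬝ᵥ x)) • vV := by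
  induction n with
  | zero => simp
  | succ n ih =>
    rw [pow_succ', ← mulVec_mulVec, ih, tM_eq, rank_one, dotProduct_add, dotProduct_smul, ph_v,
      smul_zero, add_zero, add_assoc, ← add_smul]
    push_cast
    ring_nf

theorem t_pow_ne (n : ℕ) : tM ^ (n + 1) ≠ 1 := by
  intro h
  have h1 := t_pow (n + 1) (G 0)
  rw [h, one_mulVec] at h1
  have h2 : (((n + 1 : ℕ) : ℤ) * (phV ⬝ᵥ G 0)) • vV = 0 := by
    simpa using h1
  have h3 : vV 0 = -9 := by decide
  have h4 := congrFun h2 0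
  have h5 := ph_G 0
  rw [Pi.smul_apply, h3, smul_eq_mul, Pi.zero_apply] at h4
  have h6 : (0 : ℤ) < ((n + 1 : ℕ) : ℤ) * (phV ⬝ᵥ G 0) := mul_pos (by positivity) h5
  omega

theorem ph_t (x : Fin 6 → ℤ) : phV ⬝ᵥ (tM *ᵥ x) = phV ⬝ᵥ x := by
  rw [tM_eq, rank_one, dotProduct_add, dotProduct_smul, ph_v, smul_zero, add_zero]

theorem ph_e (x : Fin 6 → ℤ) : phV ⬝ᵥ (eM *ᵥ x) = phV ⬝ᵥ x := by
  rw [dotProduct_mulVec]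
  congr 1
  decide +kernel

/-- The matrix of a letter. -/
def Lm : Fin 2 × Bool → Matrix (Fin 6) (Fin 6) ℤ
  | (0, true) => tM
  | (0, false) => eM * tM * eM
  | (1, true) => rM
  | (1, false) => eM * rM * eM

/-- The region attached to a word with given first letter. -/
def Reg : Fin 2 × Bool → (Fin 6 → ℤ) → Prop
  | (0, true), x => PM Dp x
  | (0, false), x => PM Dm x
  | (1, true), x => ∃ n y, Dpm y ∧ x = rM ^ (n + 1) *ᵥ y
  | (1, false), x => ∃ n y, Dpm y ∧ x = (eM * rM * eM) ^ (n + 1) *ᵥ y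

theorem v_Dp : PM Dp vV := by left; rw [← Dp_zero]; exact .gen 0

theorem v_Dm : PM Dm vV := by right; rw [← Dm_zero]; exact .gen 0

theorem ti_PG {x : Fin 6 → ℤ} (h : PM G x) : PM Dm ((eM * tM * eM) *ᵥ x) := by
  rw [conj_vec]; exact e_PDp (t_PG (e_PG h))

theorem ti_PDm {x : Fin 6 → ℤ} (h : PM Dm x) : PM Dm ((eM * tM * eM) *ᵥ x) := by
  rw [conj_vec]; exact e_PDp (t_PDp (e_PDm h))

theorem reg_base (a : Fin 2 × Bool) : Reg a (Lm a *ᵥ vV) := by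
  match a with
  | (0, true) => exact t_PDp v_Dp
  | (0, false) => exact ti_PDm v_Dm
  | (1, true) => exact ⟨0, vV, .inl v_Dp, by simp [Lm]⟩
  | (1, false) => exact ⟨0, vV, .inl v_Dp, by simp [Lm]⟩

theorem reg_one {s : Bool} {x : Fin 6 → ℤ} (h : Reg (1, s) x) : PM G x := by
  match s, h with
  | true, ⟨n, y, hy, e⟩ => rw [e]; exact r_pow hy n
  | false, ⟨n, y, hy, e⟩ => rw [e]; exact r_pow_inv hy n

theorem reg_zero {s : Bool} {x : Fin 6 → ℤ} (h : Reg (0, s) x) : Dpm x := by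
  match s, h with
  | true, h => exact .inl h
  | false, h => exact .inr h

theorem reg_step (a b : Fin 2 × Bool) (hab : a.1 = b.1 → a.2 = b.2) (x : Fin 6 → ℤ)
    (h : Reg b x) : Reg a (Lm a *ᵥ x) := by
  match a, b, hab, h with
  | (0, true), (0, true), _, h => exact t_PDp h
  | (0, false), (0, false), _, h => exact ti_PDm h
  | (0, true), (0, false), hab, _ => simp at hab
  | (0, false), (0, true), hab, _ => simp at hab
  | (0, true), (1, s), _, h => exact t_PG (reg_one h)
  | (0, false), (1, s), _, h => exact ti_PG (reg_one h)
  | (1, true), (1, true), _, ⟨n, y, hy, e⟩ =>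
    exact ⟨n + 1, y, hy, by rw [e, mulVec_mulVec, pow_succ' _ (n + 1)]; rfl⟩
  | (1, false), (1, false), _, ⟨n, y, hy, e⟩ =>
    exact ⟨n + 1, y, hy, by rw [e, mulVec_mulVec, pow_succ' _ (n + 1)]; rfl⟩
  | (1, true), (1, false), hab, _ => simp at hab
  | (1, false), (1, true), hab, _ => simp at hab
  | (1, true), (0, s), _, h => exact ⟨0, x, reg_zero h, by simp [Lm]⟩
  | (1, false), (0, s), _, h => exact ⟨0, x, reg_zero h, by simp [Lm]⟩

theorem ph_Lm (s : Bool) (x : Fin 6 → ℤ) : phV ⬝ᵥ (Lm (0, s) *ᵥ x) = phV ⬝ᵥ x := by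
  match s with
  | true => exact ph_t x
  | false => rw [Lm, conj_vec, ph_e, ph_t, ph_e]

theorem word_reg (L : List (Fin 2 × Bool)) (a : Fin 2 × Bool)
    (h : FreeGroup.IsReduced (a :: L)) : Reg a (((a :: L).map Lm).prod *ᵥ vV) := by
  induction L generalizing a with
  | nil => simpa using reg_base a
  | cons b L ih =>
    rw [FreeGroup.isReduced_cons_cons] at h
    have := reg_step a b h.1 _ (ih b h.2)
    rw [List.map_cons, List.prod_cons, ← mulVec_mulVec]
    exact this

theorem word_ph (L : List (Fin 2 × Bool)) (a : Fin 2 × Bool)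
    (h : FreeGroup.IsReduced (a :: L)) : phV ⬝ᵥ (((a :: L).map Lm).prod *ᵥ vV) ≠ 0 ∨
      a.1 = 0 ∧ ∃ n : ℕ, ((a :: L).map Lm).prod = Lm a ^ (n + 1) := by
  induction L generalizing a with
  | nil =>
    obtain ⟨i, s⟩ := a
    match i with
    | 0 => exact .inr ⟨rfl, 0, by simp⟩
    | 1 => exact .inl (ph_PG (reg_one (word_reg _ _ h)))
  | cons b L ih =>
    obtain ⟨i, s⟩ := a
    match i, h with
    | 1, h => exact .inl (ph_PG (reg_one (word_reg _ _ h)))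
    | 0, h =>
      rw [FreeGroup.isReduced_cons_cons] at h
      rw [List.map_cons, List.prod_cons, ← mulVec_mulVec, ph_Lm]
      rcases ih b h.2 with h1 | ⟨h1, n, h2⟩
      · exact .inl h1
      · refine .inr ⟨rfl, n + 1, ?_⟩
        have hb : b = (0, s) := Prod.ext h1 (h.1 h1.symm).symm
        rw [h2, hb, ← pow_succ']

theorem word_ne (L : List (Fin 2 × Bool)) (h : FreeGroup.IsReduced L)
    (h1 : (L.map Lm).prod = 1) : L = [] := by
  match L, h, h1 with
  | [], _, _ => rfl
  | a :: L, h, h1 =>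
    exfalso
    rcases word_ph L a h with h2 | ⟨h2, n, h3⟩
    · rw [h1, one_mulVec] at h2
      exact h2 ph_v
    · obtain ⟨i, s⟩ := a
      simp only at h2
      subst h2
      rw [h1] at h3
      match s, h3 with
      | true, h3 => exact t_pow_ne n h3.symm
      | false, h3 =>
        rw [Lm, conj_pow] at h3
        apply t_pow_ne n
        calc tM ^ (n + 1) = (eM * eM) * tM ^ (n + 1) * (eM * eM) := by rw [eM_sq]; simp
          _ = eM * (eM * tM ^ (n + 1) * eM) * eM := by simp only [Matrix.mul_assoc]
          _ = 1 := by rw [← h3, Matrix.mul_one, eM_sq]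

theorem r_pow_ne (n : ℕ) : rM ^ (n + 1) ≠ 1 := by
  intro h
  have := ph_PG (r_pow (.inl v_Dp) n)
  rw [h, one_mulVec] at this
  exact this ph_v

theorem compF_tM : companionF * tM = companionG := by decide +kernel

theorem tM_compF : tM * companionF = rM := by decide +kernel

theorem eq_of_mul_right_eq (u : GL (Fin 6) ℤ) {M N : Matrix (Fin 6) (Fin 6) ℤ}
    (h : M * u.val = N * u.val) : M = N :=
  u.isUnit.mul_right_cancel h

/-- Freeness of the group generated by `t` and `r`. -/
theorem lift_inj (t r : GL (Fin 6) ℤ) (ht : t.val = tM) (hr : r.val = rM) :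
    Function.Injective (FreeGroup.lift ![t, r]) := by
  have hti : (t⁻¹).val = eM * tM * eM := by
    refine (eq_of_mul_right_eq t ?_).symm
    rw [← Units.val_mul, inv_mul_cancel, ht, eM_tM]; rfl
  have hri : (r⁻¹).val = eM * rM * eM := by
    refine (eq_of_mul_right_eq r ?_).symm
    rw [← Units.val_mul, inv_mul_cancel, hr, eM_rM]; rfl
  rw [injective_iff_map_eq_one]
  intro w hw
  rw [← FreeGroup.toWord_eq_nil_iff]
  refine word_ne _ FreeGroup.isReduced_toWord ?_
  rw [← FreeGroup.mk_toWord (x := w), FreeGroup.lift_mk] at hw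
  have h2 := congrArg (Units.coeHom _) hw
  rw [map_list_prod, List.map_map, map_one] at h2
  rw [← h2]
  congr 1
  refine List.map_congr_left fun a _ => ?_
  match a with
  | (0, true) => simpa [Lm] using ht.symm
  | (0, false) => simpa [Lm] using hti.symm
  | (1, true) => simpa [Lm] using hr.symm
  | (1, false) => simpa [Lm] using hri.symm

end HG


/-- The hypergeometric group with `α = (0,0,0,0,0,0)`, `β = (1/2,1/2,1/5,2/5,3/5,4/5)` is
free of rank two: `t = A⁻¹B` and `r = A⁻¹BA` have infinite order, generate the group
generated by `A` and `B`, and the group is the internal free product of `⟨t⟩` and `⟨r⟩`;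
in particular it is isomorphic to `ℤ * ℤ`, the free group of rank `2`. -/
theorem hypergeometric_free_of_rank_two
    (A B : GL (Fin 6) ℤ)
    (hA : (A : Matrix (Fin 6) (Fin 6) ℤ) = companionF)
    (hB : (B : Matrix (Fin 6) (Fin 6) ℤ) = companionG) :
    ¬ IsOfFinOrder (A⁻¹ * B) ∧ ¬ IsOfFinOrder (A⁻¹ * B * A) ∧
    Subgroup.closure {A, B} = Subgroup.closure {A⁻¹ * B, A⁻¹ * B * A} ∧
    Function.Injective
      (Monoid.Coprod.lift (Subgroup.zpowers (A⁻¹ * B)).subtype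
        (Subgroup.zpowers (A⁻¹ * B * A)).subtype) ∧
    (Monoid.Coprod.lift (Subgroup.zpowers (A⁻¹ * B)).subtype
        (Subgroup.zpowers (A⁻¹ * B * A)).subtype).range = Subgroup.closure {A, B} ∧
    Nonempty ((Subgroup.closure {A, B} : Subgroup (GL (Fin 6) ℤ)) ≃* FreeGroup (Fin 2)) := by
  have ht : (A⁻¹ * B).val = HG.tM := by
    refine A.isUnit.mul_left_cancel ?_
    rw [← Units.val_mul, mul_inv_cancel_left, hA, HG.compF_tM, hB]
  have hr : (A⁻¹ * B * A).val = HG.rM := by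
    rw [Units.val_mul, ht, hA, HG.tM_compF]
  have hcl : Subgroup.closure {A, B} = Subgroup.closure {A⁻¹ * B, A⁻¹ * B * A} := by
    apply le_antisymm
    · rw [Subgroup.closure_le]
      have h1 : A⁻¹ * B ∈ Subgroup.closure {A⁻¹ * B, A⁻¹ * B * A} :=
        Subgroup.subset_closure (by simp)
      have h2 : A⁻¹ * B * A ∈ Subgroup.closure {A⁻¹ * B, A⁻¹ * B * A} :=
        Subgroup.subset_closure (by simp)
      have h3 : A ∈ Subgroup.closure {A⁻¹ * B, A⁻¹ * B * A} := by
        have := mul_mem (inv_mem h1) h2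
        rwa [inv_mul_cancel_left] at this
      have h4 : B ∈ Subgroup.closure {A⁻¹ * B, A⁻¹ * B * A} := by
        have := mul_mem h3 h1
        rwa [mul_inv_cancel_left] at this
      rintro x (rfl | rfl)
      · exact h3
      · exact h4
    · rw [Subgroup.closure_le]
      have h1 : A ∈ Subgroup.closure {A, B} := Subgroup.subset_closure (by simp)
      have h2 : B ∈ Subgroup.closure {A, B} := Subgroup.subset_closure (by simp)
      rintro x (rfl | rfl)
      · exact mul_mem (inv_mem h1) h2
      · exact mul_mem (mul_mem (inv_mem h1) h2) h1
  generalize A⁻¹ * B * A = r at *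
  generalize A⁻¹ * B = t at *
  rw [hcl]
  have hinj := HG.lift_inj t r ht hr
  have hfin : ∀ (u : GL (Fin 6) ℤ) (M : Matrix (Fin 6) (Fin 6) ℤ), u.val = M →
      (∀ n : ℕ, M ^ (n + 1) ≠ 1) → ¬ IsOfFinOrder u := by
    intro u M hu hM h
    obtain ⟨n, hn, h⟩ := isOfFinOrder_iff_pow_eq_one.1 h
    obtain ⟨m, rfl⟩ : ∃ m, n = m + 1 := ⟨n - 1, by omega⟩
    apply hM m
    rw [← hu, ← Units.val_pow_eq_pow_val, h]
    rfl
  refine ⟨hfin t _ ht HG.t_pow_ne, hfin r _ hr HG.r_pow_ne, rfl, ?_, ?_, ?_⟩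
  · let ψ : FreeGroup (Fin 2) →* Monoid.Coprod (Subgroup.zpowers t) (Subgroup.zpowers r) :=
      FreeGroup.lift ![Monoid.Coprod.inl ⟨t, Subgroup.mem_zpowers t⟩,
        Monoid.Coprod.inr ⟨r, Subgroup.mem_zpowers r⟩]
    have hψ : Function.Surjective ψ := by
      intro x
      induction x using Monoid.Coprod.induction_on with
      | inl m =>
        obtain ⟨_, k, rfl⟩ := m
        refine ⟨FreeGroup.of 0 ^ k, ?_⟩
        rw [map_zpow, FreeGroup.lift_apply_of]
        exact (map_zpow (Monoid.Coprod.inl :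
          _ →* Monoid.Coprod (Subgroup.zpowers t) (Subgroup.zpowers r))
          ⟨t, Subgroup.mem_zpowers _⟩ k).symm
      | inr m =>
        obtain ⟨_, k, rfl⟩ := m
        refine ⟨FreeGroup.of 1 ^ k, ?_⟩
        rw [map_zpow, FreeGroup.lift_apply_of]
        exact (map_zpow (Monoid.Coprod.inr :
          _ →* Monoid.Coprod (Subgroup.zpowers t) (Subgroup.zpowers r))
          ⟨r, Subgroup.mem_zpowers _⟩ k).symm
      | mul x y hx hy =>
        obtain ⟨a, rfl⟩ := hx
        obtain ⟨b, rfl⟩ := hy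
        exact ⟨a * b, map_mul _ _ _⟩
    have hcomp : (Monoid.Coprod.lift (Subgroup.zpowers t).subtype
        (Subgroup.zpowers r).subtype).comp ψ = FreeGroup.lift ![t, r] := by
      ext i : 1
      fin_cases i <;> simp [ψ]
    intro x y hxy
    obtain ⟨a, rfl⟩ := hψ x
    obtain ⟨b, rfl⟩ := hψ y
    have : FreeGroup.lift ![t, r] a = FreeGroup.lift ![t, r] b := by
      rw [← hcomp]; exact hxy
    rw [hinj this]
  · rw [Monoid.Coprod.range_lift, Subgroup.range_subtype, Subgroup.range_subtype,
      Subgroup.zpowers_eq_closure, Subgroup.zpowers_eq_closure, ← Subgroup.closure_union,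
      Set.singleton_union]
  · have hrange : (FreeGroup.lift ![t, r]).range = Subgroup.closure {t, r} := by
      rw [FreeGroup.range_lift_eq_closure]
      simp [Matrix.range_cons, Set.pair_comm]
    rw [← hrange]
    exact ⟨(MonoidHom.ofInjective hinj).symm⟩
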